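/- Let q be real with 0 < q < 1, h ≥ 1 an integer, w a complex number with |w| = 1, and x > 0 a real number. Then for every s ∈ ℂ the series defining the twisted Hurwitz q-Euler zeta function ζ^{(h,1)}_{E,q,w}(s,x) := (1+q) · Σ_{k=0}^∞ (-1)^k q^{hk} w^k exp(-s · log [x+k]_q) converges absolutely, and the function s ↦ ζ^{(h,1)}_{E,q,w}(s,x) is complex-differentiable (hence analytic) on all of ℂ. -/

import Mathlib

/-- The q-number `[t]_q = (1 - q^t)/(1 - q)` with real power `q ^ t`. -/
noncomputable def qNum (q t : ℝ) : ℝ := (1 - q ^ t) / (1 - q)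

/-- The twisted Hurwitz q-Euler zeta function
`ζ^{(h,1)}_{E,q,w}(s,x) = (1+q) · Σ_{k≥0} (-1)^k q^{hk} w^k [x+k]_q^{-s}`,
where `[x+k]_q^{-s} = exp (-s · log [x+k]_q)`. -/
noncomputable def twZeta (q : ℝ) (h : ℤ) (w : ℂ) (s : ℂ) (x : ℝ) : ℂ :=
  ((1 + q : ℝ) : ℂ) * ∑' k : ℕ,
    (-1 : ℂ) ^ k * (q : ℂ) ^ (h * k : ℤ) * w ^ k *
      Complex.exp (-s * (Real.log (qNum q (x + k)) : ℂ))

/-!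
Since `0 < [x]_q ≤ [x+k]_q ≤ 1/(1-q)`, the exponents `log [x+k]_q` stay bounded as `k` varies, and
the coefficients are the powers of the single number `-q^h w`, of modulus less than `1`. On each
disc of the `s`-plane the series is therefore dominated by a multiple of a convergent geometric
series, and Weierstrass' theorem on locally uniform limits of holomorphic functions applies.
-/

section ExponentialSeries

variable {ι : Type*} {a l : ι → ℂ} {M : ℝ}

lemma norm_cexp_neg_mul_le {R : ℝ} {s z : ℂ} (hs : ‖s‖ ≤ R) (hz : ‖z‖ ≤ M) :
    ‖Complex.exp (-s * z)‖ ≤ Real.exp (R * M) :=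
  calc ‖Complex.exp (-s * z)‖ ≤ Real.exp ‖-s * z‖ := Complex.norm_exp_le_exp_norm _
    _ = Real.exp (‖s‖ * ‖z‖) := by rw [norm_mul, norm_neg]
    _ ≤ Real.exp (R * M) := by gcongr; exact (norm_nonneg s).trans hs

lemma norm_mul_cexp_neg_mul_le {R : ℝ} {s z : ℂ} (c : ℂ) (hs : ‖s‖ ≤ R) (hz : ‖z‖ ≤ M) :
    ‖c * Complex.exp (-s * z)‖ ≤ ‖c‖ * Real.exp (R * M) := by
  rw [norm_mul]
  gcongr
  exact norm_cexp_neg_mul_le hs hz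

lemma summable_norm_mul_cexp_neg_mul (ha : Summable fun i => ‖a i‖) (hl : ∀ i, ‖l i‖ ≤ M)
    (s : ℂ) : Summable fun i => ‖a i * Complex.exp (-s * l i)‖ :=
  (ha.mul_right (Real.exp (‖s‖ * M))).of_nonneg_of_le (fun _ => norm_nonneg _)
    fun i => norm_mul_cexp_neg_mul_le (a i) le_rfl (hl i)

lemma differentiable_tsum_mul_cexp_neg_mul (ha : Summable fun i => ‖a i‖)
    (hl : ∀ i, ‖l i‖ ≤ M) :
    Differentiable ℂ fun s => ∑' i, a i * Complex.exp (-s * l i) := by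
  intro s
  have differentiableOn_ball : DifferentiableOn ℂ (fun z => ∑' i, a i * Complex.exp (-z * l i))
      (Metric.ball 0 (‖s‖ + 1)) :=
    Complex.differentiableOn_tsum_of_summable_norm (ha.mul_right (Real.exp ((‖s‖ + 1) * M)))
      (fun i => by fun_prop) Metric.isOpen_ball
      fun i z hz => norm_mul_cexp_neg_mul_le (a i) (mem_ball_zero_iff.mp hz).le (hl i)
  exact differentiableOn_ball.differentiableAt (Metric.isOpen_ball.mem_nhds (by simp))

end ExponentialSeries

section QNumber

variable {q x t : ℝ}

lemma qNum_pos (hq0 : 0 < q) (hq1 : q < 1) (ht : 0 < t) : 0 < qNum q t :=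
  div_pos (sub_pos.mpr (Real.rpow_lt_one hq0.le hq1 ht)) (sub_pos.mpr hq1)

lemma qNum_monotone (hq0 : 0 < q) (hq1 : q < 1) : Monotone (qNum q) := fun _ _ hst =>
  div_le_div_of_nonneg_right
    (sub_le_sub_left (Real.rpow_le_rpow_of_exponent_ge hq0 hq1.le hst) 1) (sub_pos.mpr hq1).le

lemma qNum_le_inv_one_sub (hq0 : 0 < q) (hq1 : q < 1) (t : ℝ) : qNum q t ≤ (1 - q)⁻¹ := by
  rw [qNum, div_eq_mul_inv]
  exact mul_le_of_le_one_left (inv_nonneg.mpr (sub_pos.mpr hq1).le)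
    (sub_le_self 1 (Real.rpow_nonneg hq0.le t))

lemma abs_log_qNum_le (hq0 : 0 < q) (hq1 : q < 1) (hx : 0 < x) (hxt : x ≤ t) :
    |Real.log (qNum q t)| ≤ max |Real.log (qNum q x)| |Real.log (1 - q)⁻¹| :=
  abs_le_max_abs_abs
    (Real.log_le_log (qNum_pos hq0 hq1 hx) (qNum_monotone hq0 hq1 hxt))
    (Real.log_le_log (qNum_pos hq0 hq1 (hx.trans_le hxt)) (qNum_le_inv_one_sub hq0 hq1 t))

end QNumber

lemma neg_one_pow_mul_zpow_mul_pow {K : Type*} [Field K] (a w : K) (h : ℤ) (k : ℕ) :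
    (-1) ^ k * a ^ (h * k : ℤ) * w ^ k = (-(a ^ h * w)) ^ k := by
  rw [zpow_mul, zpow_natCast, ← mul_pow, ← mul_pow, neg_one_mul, neg_mul]

theorem stmt3_general (q : ℝ) (hq0 : 0 < q) (hq1 : q < 1) (h : ℤ)
    (w : ℂ) (hw : q ^ h * ‖w‖ < 1) (x : ℝ) (hx : 0 < x) :
    (∀ s : ℂ, Summable (fun k : ℕ =>
      ‖(-1 : ℂ) ^ k * (q : ℂ) ^ (h * k : ℤ) * w ^ k *
        Complex.exp (-s * (Real.log (qNum q (x + k)) : ℂ))‖)) ∧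
    Differentiable ℂ (fun s : ℂ => twZeta q h w s x) := by
  have norm_ratio_lt_one : ‖-((q : ℂ) ^ h * w)‖ < 1 := by
    rwa [norm_neg, norm_mul, norm_zpow, Complex.norm_of_nonneg hq0.le]
  have summable_coeff :
      Summable fun k : ℕ => ‖(-1 : ℂ) ^ k * (q : ℂ) ^ (h * k : ℤ) * w ^ k‖ := by
    simpa only [neg_one_pow_mul_zpow_mul_pow] using
      summable_norm_geometric_of_norm_lt_one norm_ratio_lt_one
  have norm_log_le (k : ℕ) : ‖(Real.log (qNum q (x + k)) : ℂ)‖ ≤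
      max |Real.log (qNum q x)| |Real.log (1 - q)⁻¹| := by
    rw [Complex.norm_real, Real.norm_eq_abs]
    exact abs_log_qNum_le hq0 hq1 hx (le_add_of_nonneg_right k.cast_nonneg)
  exact ⟨summable_norm_mul_cexp_neg_mul summable_coeff norm_log_le,
    (differentiable_tsum_mul_cexp_neg_mul summable_coeff norm_log_le).const_mul _⟩

/-- For `0 < q < 1`, integer `h ≥ 1`, `|w| = 1` and `x > 0`, the series defining the
twisted Hurwitz q-Euler zeta function converges absolutely for every `s ∈ ℂ`, and
`s ↦ ζ^{(h,1)}_{E,q,w}(s,x)` is entire. -/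
theorem stmt3 (q : ℝ) (hq0 : 0 < q) (hq1 : q < 1) (h : ℤ) (hh : 1 ≤ h)
    (w : ℂ) (hw : ‖w‖ = 1) (x : ℝ) (hx : 0 < x) :
    (∀ s : ℂ, Summable (fun k : ℕ =>
      ‖(-1 : ℂ) ^ k * (q : ℂ) ^ (h * k : ℤ) * w ^ k *
        Complex.exp (-s * (Real.log (qNum q (x + k)) : ℂ))‖)) ∧
    Differentiable ℂ (fun s : ℂ => twZeta q h w s x) :=
  stmt3_general q hq0 hq1 h w
    (by rw [hw, mul_one]; exact zpow_lt_one₀ hq0 hq1 (by lia)) x hx
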